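/- Let τ ∈ ℂ ∖ ℝ, let Γ = ℤ + ℤτ ⊂ ℂ ≅ ℝ², and set n = |τ|² and t = τ + conj(τ) = 2·Re(τ). Then Γ has a well-rounded sublattice if and only if one of the following holds: (1) both t and n are rational; (2) t is rational and n is irrational; (3) t is irrational and there exist q, r ∈ ℚ with n = q + r·t and with q + r² the square of a rational number. -/

import Mathlib

noncomputable section

/-- A subgroup `Λ` of `ℂ ≅ ℝ²` is well-rounded if it contains two `ℝ`-linearly
independent vectors, both of minimal norm among the nonzero elements of `Λ`. -/
def IsWellRounded (Λ : AddSubgroup ℂ) : Prop :=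
  ∃ x y : ℂ, x ∈ Λ ∧ y ∈ Λ ∧ LinearIndependent ℝ ![x, y] ∧
    (∀ z ∈ Λ, z ≠ 0 → ‖x‖ ≤ ‖z‖) ∧ (∀ z ∈ Λ, z ≠ 0 → ‖y‖ ≤ ‖z‖)

/-!
The diagonals `x ± y` of the rhombus on two minimal vectors are orthogonal. Conversely, orthogonal
`u, v ∈ Γ` can be scaled by integers until their lengths are close; then `u ± v` have equal length
and enclose an angle between 60° and 120°, so they are minimal vectors of the lattice they generate.
Hence `Γ` has a well-rounded sublattice if and only if it contains two nonzero orthogonal vectors.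

Up to rational scaling, a nonzero vector of `ℤ + ℤτ` is `1` or `α + τ` with `α` rational.
Orthogonality of `1` and `α + τ` means `t = -2α`; orthogonality of `α + τ` and `β + τ` means
`n = -αβ - (α + β) t / 2`, where `q = -αβ` and `r = -(α + β) / 2` are exactly the rationals for
which `q + r² = ((α - β) / 2)²` is a rational square.
-/

open scoped InnerProductSpace Matrix

section FiniteIndex

variable {ι R M : Type*} [AddCommGroup M]

/-- Cramer's rule: the determinant of the matrix expressing `x` in terms of `w` is such a `d`. -/
lemma exists_smul_mem_span_of_linearIndependent [Finite ι] [CommRing R] [IsDomain R] [Module R M]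
    {w x : ι → M} (hx : LinearIndependent R x)
    (hxw : ∀ i, x i ∈ Submodule.span R (Set.range w)) :
    ∃ d : R, d ≠ 0 ∧ ∀ z ∈ Submodule.span R (Set.range w),
      d • z ∈ Submodule.span R (Set.range x) := by
  classical
  cases nonempty_fintype ι
  choose A hA using fun i ↦ (Submodule.mem_span_range_iff_exists_fun R).mp (hxw i)
  have sum_smul_x (c : ι → R) : ∑ i, c i • x i = ∑ j, (c ᵥ* Matrix.of A) j • w j := by
    simp only [← hA, Matrix.vecMul, dotProduct, Matrix.of_apply, Finset.smul_sum, Finset.sum_smul,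
      mul_smul]
    exact Finset.sum_comm
  refine ⟨(Matrix.of A).det, fun hdet ↦ ?_, fun z hz ↦ ?_⟩
  · obtain ⟨c, hc, hcA⟩ := Matrix.exists_vecMul_eq_zero_iff.mpr hdet
    exact hc (funext (Fintype.linearIndependent_iff.mp hx c (by simp [sum_smul_x, hcA])))
  · obtain ⟨c, rfl⟩ := (Submodule.mem_span_range_iff_exists_fun R).mp hz
    refine (Submodule.mem_span_range_iff_exists_fun R).mpr ⟨c ᵥ* (Matrix.of A).adjugate, ?_⟩
    simp [sum_smul_x, Matrix.vecMul_vecMul, Matrix.adjugate_mul, Matrix.vecMul_smul,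
      Finset.smul_sum, mul_smul]

lemma relIndex_closure_range_ne_zero [Finite ι] {w x : ι → M} (hx : LinearIndependent ℤ x)
    (hxw : ∀ i, x i ∈ AddSubgroup.closure (Set.range w)) :
    (AddSubgroup.closure (Set.range x)).relIndex (AddSubgroup.closure (Set.range w)) ≠ 0 := by
  simp only [← Submodule.span_int_eq_addSubgroupClosure, Submodule.mem_toAddSubgroup] at hxw ⊢
  obtain ⟨k, hk, hkw⟩ : ∃ k : ℕ, k ≠ 0 ∧ ∀ z ∈ Submodule.span ℤ (Set.range w),
      k • z ∈ Submodule.span ℤ (Set.range x) := by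
    obtain ⟨d, hd, hdw⟩ := exists_smul_mem_span_of_linearIndependent hx hxw
    obtain ⟨k, rfl | rfl⟩ := d.eq_nat_or_neg <;> exact ⟨k, by simpa using hd, by simpa using hdw⟩
  have hfg : (Submodule.span ℤ (Set.range w)).toAddSubgroup.FG :=
    (Submodule.fg_iff_addSubgroup_fg _).mp (Submodule.fg_span (Set.finite_range w))
  have hle : (Submodule.span ℤ (Set.range w)).toAddSubgroup.map (nsmulAddMonoidHom k) ≤
      (Submodule.span ℤ (Set.range x)).toAddSubgroup := by
    rintro _ ⟨z, hz, rfl⟩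
    exact hkw z hz
  exact mt (AddSubgroup.relIndex_eq_zero_of_le_left hle)
    (AddSubgroup.isFiniteRelIndex_map_nsmulAddMonoidHom_of_fg hfg hk).relIndex_ne_zero

end FiniteIndex

lemma IsWellRounded.relIndex_ne_zero {Λ : AddSubgroup ℂ} (hΛ : IsWellRounded Λ) {w₁ w₂ : ℂ}
    (hle : Λ ≤ AddSubgroup.closure {w₁, w₂}) : Λ.relIndex (AddSubgroup.closure {w₁, w₂}) ≠ 0 := by
  obtain ⟨x, y, hx, hy, hxy, -, -⟩ := hΛ
  have hspan : AddSubgroup.closure (Set.range ![x, y]) ≤ Λ := by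
    simp [Set.insert_subset_iff, hx, hy]
  have hrange : Set.range ![w₁, w₂] = {w₁, w₂} := by simp [Set.pair_comm]
  rw [← hrange] at hle ⊢
  exact mt (AddSubgroup.relIndex_eq_zero_of_le_left hspan) <|
    relIndex_closure_range_ne_zero (hxy.restrict_scalars' ℤ) fun i ↦
      hle (hspan (AddSubgroup.subset_closure (Set.mem_range_self i)))

lemma one_le_sq_sub_abs_mul_add_sq {m n : ℤ} (hmn : m ≠ 0 ∨ n ≠ 0) :
    1 ≤ m ^ 2 - |m * n| + n ^ 2 := by
  have h : 0 < m ^ 2 + n ^ 2 := by rcases hmn with h | h <;> positivity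
  have hmul : 2 * |m * n| ≤ m ^ 2 + n ^ 2 := by
    simpa [abs_mul, mul_assoc] using two_mul_le_add_sq |m| |n|
  linarith

section OrthogonalPairs

variable {E : Type*} [NormedAddCommGroup E] [InnerProductSpace ℝ E] {u v x y : E}

lemma linearIndependent_add_sub (h : LinearIndependent ℝ ![u, v]) :
    LinearIndependent ℝ ![u + v, u - v] := by
  have := (LinearIndependent.pair_add_smul_add_smul_iff (x := u) (y := v) (1 : ℝ) 1 1 (-1)).mpr
    ⟨h, by norm_num⟩
  simpa [← sub_eq_add_neg] using this

lemma linearIndependent_pair_of_inner_eq_zero (hu : u ≠ 0) (hv : v ≠ 0) (huv : ⟪u, v⟫_ℝ = 0) :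
    LinearIndependent ℝ ![u, v] := by
  refine linearIndependent_of_ne_zero_of_inner_eq_zero (𝕜 := ℝ) ?_ ?_
  · simp [Fin.forall_fin_two, hu, hv]
  · intro i j hij
    fin_cases i <;> fin_cases j <;> simp_all [real_inner_comm]

lemma norm_le_norm_zsmul_add_zsmul (hnorm : ‖x‖ = ‖y‖) (hinner : 2 * |⟪x, y⟫_ℝ| ≤ ‖x‖ ^ 2)
    {m n : ℤ} (hmn : m ≠ 0 ∨ n ≠ 0) : ‖x‖ ≤ ‖m • x + n • y‖ := by
  have hform : (1 : ℝ) ≤ m ^ 2 - |(m : ℝ) * n| + n ^ 2 := by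
    exact_mod_cast one_le_sq_sub_abs_mul_add_sq hmn
  refine le_of_sq_le_sq ?_ (norm_nonneg _)
  calc ‖x‖ ^ 2 ≤ (m ^ 2 - |(m : ℝ) * n| + n ^ 2) * ‖x‖ ^ 2 :=
        le_mul_of_one_le_left (sq_nonneg _) hform
    _ ≤ (m ^ 2 + n ^ 2) * ‖x‖ ^ 2 - |(m : ℝ) * n| * (2 * |⟪x, y⟫_ℝ|) := by
        linarith [mul_le_mul_of_nonneg_left hinner (abs_nonneg ((m : ℝ) * n))]
    _ ≤ (m ^ 2 + n ^ 2) * ‖x‖ ^ 2 + 2 * (m * n * ⟪x, y⟫_ℝ) := by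
        linarith [neg_abs_le (m * n * ⟪x, y⟫_ℝ), abs_mul ((m : ℝ) * n) ⟪x, y⟫_ℝ]
    _ = ‖m • x + n • y‖ ^ 2 := by
        simp only [← Int.cast_smul_eq_zsmul ℝ, norm_add_sq_real, norm_smul, mul_pow,
          real_inner_smul_left, real_inner_smul_right, ← hnorm, Real.norm_eq_abs, sq_abs]
        ring

/-- A subgroup `Γ` with two nonzero orthogonal vectors; for a planar lattice this says that `Γ` has
a rectangular sublattice, spanned by the two vectors. -/
def HasOrthogonalPair (Γ : AddSubgroup E) : Prop :=
  ∃ u ∈ Γ, ∃ v ∈ Γ, u ≠ 0 ∧ v ≠ 0 ∧ ⟪u, v⟫_ℝ = 0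

lemma hasOrthogonalPair_of_nsmul_mem {Γ : AddSubgroup E} {k l : ℕ} (hk : k ≠ 0) (hl : l ≠ 0)
    (hku : k • u ∈ Γ) (hlv : l • v ∈ Γ) (hu : u ≠ 0) (hv : v ≠ 0) (huv : ⟪u, v⟫_ℝ = 0) :
    HasOrthogonalPair Γ := by
  refine ⟨k • u, hku, l • v, hlv, ?_, ?_, ?_⟩ <;>
    simp [← Nat.cast_smul_eq_nsmul ℝ, real_inner_smul_left, real_inner_smul_right, *]

end OrthogonalPairs

lemma exists_nat_mul_lt_mul_lt {K : Type*} [Field K] [LinearOrder K] [IsStrictOrderedRing K]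
    [Archimedean K] {a b c : K} (ha : 0 < a) (hb : 0 < b) (hc : 1 < c) :
    ∃ k l : ℕ, 0 < k ∧ 0 < l ∧ k * a < l * b ∧ l * b < c * (k * a) := by
  obtain ⟨r, har, hrc⟩ := exists_rat_btwn (lt_mul_left (div_pos ha hb) hc)
  have hr : 0 < r := by exact_mod_cast (div_pos ha hb).trans har
  have hden : (0 : K) < r.den := by exact_mod_cast r.den_pos
  have hnum : (r.num.toNat : K) = r * r.den := by
    have h : (r.num.toNat : ℚ) = r * r.den := by
      rw [Rat.mul_den_eq_num]
      exact_mod_cast Int.toNat_of_nonneg (Rat.num_nonneg.mpr hr.le)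
    exact_mod_cast h
  rw [div_lt_iff₀ hb] at har
  rw [← mul_div_assoc, lt_div_iff₀ hb] at hrc
  refine ⟨r.den, r.num.toNat, r.den_pos, by simpa using hr, ?_, ?_⟩ <;> rw [hnum]
  · linarith [mul_lt_mul_of_pos_left har hden]
  · linarith [mul_lt_mul_of_pos_left hrc hden]

lemma isWellRounded_closure_pair {x y : ℂ} (hxy : LinearIndependent ℝ ![x, y])
    (hnorm : ‖x‖ = ‖y‖) (hinner : 2 * |⟪x, y⟫_ℝ| ≤ ‖x‖ ^ 2) :
    IsWellRounded (AddSubgroup.closure {x, y}) := by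
  have hmin : ∀ z ∈ AddSubgroup.closure {x, y}, z ≠ 0 → ‖x‖ ≤ ‖z‖ := by
    intro z hz hz0
    obtain ⟨m, n, rfl⟩ := AddSubgroup.mem_closure_pair.mp hz
    refine norm_le_norm_zsmul_add_zsmul hnorm hinner ?_
    contrapose! hz0
    simp [hz0]
  exact ⟨x, y, AddSubgroup.subset_closure (by simp), AddSubgroup.subset_closure (by simp), hxy,
    hmin, hnorm ▸ hmin⟩

lemma isWellRounded_closure_add_sub {u v : ℂ} (hu : u ≠ 0) (hv : v ≠ 0) (huv : ⟪u, v⟫_ℝ = 0)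
    (hle : ‖u‖ ≤ ‖v‖) (hsq : ‖v‖ ^ 2 ≤ 3 * ‖u‖ ^ 2) :
    IsWellRounded (AddSubgroup.closure {u + v, u - v}) := by
  have hnorm : ‖u + v‖ ^ 2 = ‖u‖ ^ 2 + ‖v‖ ^ 2 := by rw [norm_add_sq_real, huv]; ring
  have hinner : ⟪u + v, u - v⟫_ℝ = ‖u‖ ^ 2 - ‖v‖ ^ 2 := by
    simp only [inner_add_left, inner_sub_right, real_inner_self_eq_norm_sq, real_inner_comm u v]
    ring
  refine isWellRounded_closure_pair
    (linearIndependent_add_sub (linearIndependent_pair_of_inner_eq_zero hu hv huv)) ?_ ?_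
  · rw [add_comm u v, ← norm_sub_rev v u, norm_sub_eq_norm_add huv]
  · rw [hnorm, hinner, abs_of_nonpos (sub_nonpos.mpr (by gcongr))]
    linarith

lemma IsWellRounded.hasOrthogonalPair {Λ Γ : AddSubgroup ℂ} (hΛ : IsWellRounded Λ) (hle : Λ ≤ Γ) :
    HasOrthogonalPair Γ := by
  obtain ⟨x, y, hx, hy, hxy, hminx, hminy⟩ := hΛ
  have hdiag := linearIndependent_add_sub hxy
  refine ⟨x + y, hle (add_mem hx hy), x - y, hle (sub_mem hx hy), hdiag.ne_zero 0, hdiag.ne_zero 1,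
    (real_inner_add_sub_eq_zero_iff x y).mpr ?_⟩
  exact le_antisymm (hminx y hy (hxy.ne_zero 1)) (hminy x hx (hxy.ne_zero 0))

lemma HasOrthogonalPair.exists_isWellRounded_le {Γ : AddSubgroup ℂ} (hΓ : HasOrthogonalPair Γ) :
    ∃ Λ ≤ Γ, IsWellRounded Λ := by
  obtain ⟨u, hu, v, hv, hu0, hv0, huv⟩ := hΓ
  obtain ⟨k, l, hk, hl, hlt, hgt⟩ := exists_nat_mul_lt_mul_lt (norm_pos_iff.mpr hu0)
    (norm_pos_iff.mpr hv0) (show (1 : ℝ) < 3 / 2 by norm_num)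
  have hku : k • u ∈ Γ := nsmul_mem hu k
  have hlv : l • v ∈ Γ := nsmul_mem hv l
  refine ⟨AddSubgroup.closure {k • u + l • v, k • u - l • v}, ?_,
    isWellRounded_closure_add_sub (smul_ne_zero hk.ne' hu0) (smul_ne_zero hl.ne' hv0) ?_ ?_ ?_⟩
  · rw [AddSubgroup.closure_le, Set.pair_subset_iff]
    exact ⟨add_mem hku hlv, sub_mem hku hlv⟩
  · simp only [← Nat.cast_smul_eq_nsmul ℝ, real_inner_smul_left, real_inner_smul_right, huv,
      mul_zero]
  · simpa using hlt.le
  · have hpos : 0 ≤ l * ‖v‖ := by positivity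
    simp only [nsmul_eq_mul, norm_mul, Complex.norm_natCast]
    nlinarith [hpos]

theorem exists_wellRounded_sublattice_iff_hasOrthogonalPair (w₁ w₂ : ℂ) :
    (∃ Λ ≤ AddSubgroup.closure {w₁, w₂},
        Λ.relIndex (AddSubgroup.closure {w₁, w₂}) ≠ 0 ∧ IsWellRounded Λ) ↔
      HasOrthogonalPair (AddSubgroup.closure {w₁, w₂}) := by
  constructor
  · rintro ⟨Λ, hle, -, hΛ⟩
    exact hΛ.hasOrthogonalPair hle
  · intro h
    obtain ⟨Λ, hle, hΛ⟩ := h.exists_isWellRounded_le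
    exact ⟨Λ, hle, hΛ.relIndex_ne_zero hle, hΛ⟩

lemma den_nsmul_add_mem_closure {K : Type*} [DivisionRing K] [CharZero K] (α : ℚ) (τ : K) :
    α.den • ((α : K) + τ) ∈ AddSubgroup.closure {1, τ} := by
  refine AddSubgroup.mem_closure_pair.mpr ⟨α.num, α.den, ?_⟩
  have hnum : (α.num : K) = α.den * α := by exact_mod_cast (Rat.den_mul_eq_num α).symm
  simp [hnum]

lemma exists_eq_smul_of_mem_closure_one {τ u : ℂ} (hu : u ∈ AddSubgroup.closure {1, τ})
    (hu0 : u ≠ 0) :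
    ∃ s : ℝ, s ≠ 0 ∧ ∃ d : ℂ, u = s • d ∧ (d = 1 ∨ ∃ α : ℚ, d = α + τ) := by
  obtain ⟨a, b, rfl⟩ := AddSubgroup.mem_closure_pair.mp hu
  rcases eq_or_ne b 0 with rfl | hb
  · exact ⟨a, fun ha ↦ hu0 (by simp_all), 1, by simp, .inl rfl⟩
  · have hbC : (b : ℂ) ≠ 0 := by exact_mod_cast hb
    refine ⟨b, by exact_mod_cast hb, _, ?_, .inr ⟨a / b, rfl⟩⟩
    push_cast
    simp only [Complex.real_smul, zsmul_eq_mul, Complex.ofReal_intCast]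
    field_simp

lemma inner_ofReal_add (a b : ℝ) (τ : ℂ) :
    ⟪(a : ℂ) + τ, (b : ℂ) + τ⟫_ℝ = a * b + (a + b) * τ.re + Complex.normSq τ := by
  simp only [Complex.inner, Complex.normSq_apply, Complex.mul_re, Complex.conj_re, Complex.conj_im,
    Complex.add_re, Complex.add_im, Complex.ofReal_re, Complex.ofReal_im]
  ring

lemma hasOrthogonalPair_closure_one_iff {τ : ℂ} (hτ : τ.im ≠ 0) :
    HasOrthogonalPair (AddSubgroup.closure {1, τ}) ↔
      (∃ α : ℚ, (α : ℝ) + τ.re = 0) ∨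
        ∃ α β : ℚ, (α : ℝ) * β + (α + β) * τ.re + Complex.normSq τ = 0 := by
  have inner_one (α : ℚ) : ⟪(1 : ℂ), α + τ⟫_ℝ = α + τ.re := by simp [Complex.inner]
  have inner_add (α β : ℚ) :
      ⟪(α : ℂ) + τ, β + τ⟫_ℝ = α * β + (α + β) * τ.re + Complex.normSq τ := by
    exact_mod_cast inner_ofReal_add α β τ
  constructor
  · rintro ⟨u, hu, v, hv, hu0, hv0, huv⟩
    obtain ⟨s, hs, d, rfl, hd⟩ := exists_eq_smul_of_mem_closure_one hu hu0
    obtain ⟨s', hs', d', rfl, hd'⟩ := exists_eq_smul_of_mem_closure_one hv hv0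
    have hdd' : ⟪d, d'⟫_ℝ = 0 := by
      rwa [real_inner_smul_left, real_inner_smul_right, mul_eq_zero_iff_left hs,
        mul_eq_zero_iff_left hs'] at huv
    rcases hd with rfl | ⟨α, rfl⟩ <;> rcases hd' with rfl | ⟨β, rfl⟩
    · simp at hdd'
    · exact .inl ⟨β, inner_one β ▸ hdd'⟩
    · exact .inl ⟨α, inner_one α ▸ real_inner_comm (α + τ) 1 ▸ hdd'⟩
    · exact .inr ⟨α, β, inner_add α β ▸ hdd'⟩
  · have hne (α : ℚ) : (α : ℂ) + τ ≠ 0 := fun h ↦ hτ (by simpa using congrArg Complex.im h)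
    rintro (⟨α, h⟩ | ⟨α, β, h⟩)
    · refine hasOrthogonalPair_of_nsmul_mem one_ne_zero α.den_nz ?_
        (den_nsmul_add_mem_closure α τ) one_ne_zero (hne α) (inner_one α ▸ h)
      exact one_nsmul (1 : ℂ) ▸ AddSubgroup.subset_closure (by simp)
    · exact hasOrthogonalPair_of_nsmul_mem α.den_nz β.den_nz (den_nsmul_add_mem_closure α τ)
        (den_nsmul_add_mem_closure β τ) (hne α) (hne β) (inner_add α β ▸ h)

lemma exists_rat_add_eq_zero_iff {K : Type*} [Field K] [CharZero K] (s : K) :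
    (∃ α : ℚ, α + s = 0) ↔ ∃ q : ℚ, 2 * s = q := by
  constructor
  · rintro ⟨α, hα⟩
    exact ⟨-2 * α, by push_cast; linear_combination 2 * hα⟩
  · rintro ⟨q, hq⟩
    exact ⟨-q / 2, by push_cast; linear_combination hq / 2⟩

lemma exists_rat_mul_add_eq_zero_iff {K : Type*} [Field K] [CharZero K] (s n : K) :
    (∃ α β : ℚ, α * β + (α + β) * s + n = 0) ↔
      ∃ q r : ℚ, n = q + r * (2 * s) ∧ ∃ m : ℚ, q + r ^ 2 = m ^ 2 := by
  constructor
  · rintro ⟨α, β, h⟩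
    refine ⟨-(α * β), -(α + β) / 2, ?_, (α - β) / 2, by ring⟩
    push_cast
    linear_combination h
  · rintro ⟨q, r, hn, m, hm⟩
    have hq : (q : K) = m ^ 2 - r ^ 2 := by exact_mod_cast eq_sub_of_add_eq hm
    refine ⟨m - r, -m - r, ?_⟩
    push_cast
    linear_combination hn + hq

theorem wellRounded_sublattice_existence_criterion (τ : ℂ) (hτ : τ.im ≠ 0) :
    (∃ Λ : AddSubgroup ℂ, Λ ≤ AddSubgroup.closure {1, τ} ∧
        (Λ.addSubgroupOf (AddSubgroup.closure {1, τ})).index ≠ 0 ∧ IsWellRounded Λ) ↔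
      ((∃ q : ℚ, 2 * τ.re = (q : ℝ)) ∧ (∃ q : ℚ, Complex.normSq τ = (q : ℝ))) ∨
      ((∃ q : ℚ, 2 * τ.re = (q : ℝ)) ∧ ¬(∃ q : ℚ, Complex.normSq τ = (q : ℝ))) ∨
      (¬(∃ q : ℚ, 2 * τ.re = (q : ℝ)) ∧
        ∃ q r : ℚ, Complex.normSq τ = (q : ℝ) + (r : ℝ) * (2 * τ.re) ∧
          ∃ m : ℚ, q + r ^ 2 = m ^ 2) := by
  refine (exists_wellRounded_sublattice_iff_hasOrthogonalPair 1 τ).trans ?_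
  rw [hasOrthogonalPair_closure_one_iff hτ, exists_rat_add_eq_zero_iff,
    exists_rat_mul_add_eq_zero_iff]
  tauto
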